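/- arXiv:math/0111136 — 3 statements merged into one kernel-verified Lean document; each statement's English description precedes it below -/
import Mathlib

section
/- The function V(α, β) := Λ(α) + Λ(β) + Λ(π − α − β) is strictly concave on the open triangle T = {(α, β) ∈ ℝ² : α > 0, β > 0, α + β < π}. (This is the concavity part of Corollary 2.9: the volume of the ideal hyperbolic simplex, which equals Λ(α)+Λ(β)+Λ(γ) where α, β, γ are its interior dihedral angles with α+β+γ=π, is a concave function of the dihedral angles.) -/
/-- The Lobachevsky function `Λ(θ) = -∫₀^θ log |2 sin u| du`. -/
noncomputable def lobachevsky (θ : ℝ) : ℝ :=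
  -∫ u in (0:ℝ)..θ, Real.log |2 * Real.sin u|

/-!
Since `Λ'' = -cot`, the second derivative of the volume in the direction `(a, b)` is
`-(a² cot α + b² cot β + c² cot γ)` with `c = -a - b` and `γ = π - α - β`. On the plane
`a + b + c = 0` the quadratic form `a² x + b² y + c² z` has leading coefficient `x + z` and
determinant `x y + y z + z x`. For cotangents of the angles of a triangle the first is
`sin β / (sin α sin γ) > 0` and the second is `1`, so the Hessian is negative definite.
-/

open Real Set

section SecondDerivativeTest

theorem strictConcaveOn_of_hasDerivAt2_neg {D : Set ℝ} {f f' f'' : ℝ → ℝ} (hD : Convex ℝ D)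
    (hf : ContinuousOn f D) (hf' : ∀ t ∈ interior D, HasDerivAt f (f' t) t)
    (hf'' : ∀ t ∈ interior D, HasDerivAt f' (f'' t) t) (hneg : ∀ t ∈ interior D, f'' t < 0) :
    StrictConcaveOn ℝ D f := by
  have hanti : StrictAntiOn f' (interior D) := by
    refine strictAntiOn_of_deriv_neg hD.interior (HasDerivAt.continuousOn hf'') fun t ht => ?_
    rw [interior_interior] at ht
    rw [(hf'' t ht).deriv]
    exact hneg t ht
  exact (hanti.congr fun t ht => (hf' t ht).deriv.symm).strictConcaveOn_of_deriv hD hf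

variable {E : Type*} [AddCommGroup E] [Module ℝ E]

theorem strictConcaveOn_of_forall_lineMap {s : Set E} {f : E → ℝ} (hs : Convex ℝ s)
    (hf : ∀ x ∈ s, ∀ y ∈ s, x ≠ y →
      StrictConcaveOn ℝ (Icc (0 : ℝ) 1) fun t => f (AffineMap.lineMap x y t)) :
    StrictConcaveOn ℝ s f := by
  refine ⟨hs, fun x hx y hy hxy a b ha hb hab => ?_⟩
  have h := (hf x hx y hy hxy).2 (left_mem_Icc.2 zero_le_one) (right_mem_Icc.2 zero_le_one)
    zero_ne_one ha hb hab
  obtain rfl : a = 1 - b := by linarith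
  simpa [AffineMap.lineMap_apply_module] using h

theorem hasDerivAt_comp_lineMap {F : Type*} [NormedAddCommGroup F] [NormedSpace ℝ F] {f : E → F}
    {f' : F} {t : ℝ} {x y : E} (hf : HasLineDerivAt ℝ f f' (AffineMap.lineMap x y t) (y - x)) :
    HasDerivAt (fun u => f (AffineMap.lineMap x y u)) f' t := by
  rw [HasLineDerivAt, ← sub_self t] at hf
  refine (hf.comp_sub_const t t).congr_of_eventuallyEq (.of_forall fun u => ?_)
  simp only [AffineMap.lineMap_apply_module']
  congr 1
  module

theorem strictConcaveOn_of_hasLineDerivAt2_neg {s : Set E} {f : E → ℝ} {f' f'' : E → E → ℝ}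
    (hs : Convex ℝ s) (hf' : ∀ x ∈ s, ∀ v, HasLineDerivAt ℝ f (f' v x) x v)
    (hf'' : ∀ x ∈ s, ∀ v, HasLineDerivAt ℝ (f' v) (f'' v x) x v)
    (hneg : ∀ x ∈ s, ∀ v ≠ 0, f'' v x < 0) : StrictConcaveOn ℝ s f := by
  refine strictConcaveOn_of_forall_lineMap hs fun x hx y hy hxy => ?_
  have hmem : ∀ t ∈ Icc (0 : ℝ) 1, AffineMap.lineMap x y t ∈ s := fun t => hs.lineMap_mem hx hy
  have hderiv : ∀ t ∈ Icc (0 : ℝ) 1, HasDerivAt (fun u => f (AffineMap.lineMap x y u))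
      (f' (y - x) (AffineMap.lineMap x y t)) t := fun t ht =>
    hasDerivAt_comp_lineMap (hf' _ (hmem t ht) (y - x))
  have hderiv₂ : ∀ t ∈ Icc (0 : ℝ) 1, HasDerivAt (fun u => f' (y - x) (AffineMap.lineMap x y u))
      (f'' (y - x) (AffineMap.lineMap x y t)) t := fun t ht =>
    hasDerivAt_comp_lineMap (hf'' _ (hmem t ht) (y - x))
  exact strictConcaveOn_of_hasDerivAt2_neg (convex_Icc 0 1) (HasDerivAt.continuousOn hderiv)
    (fun t ht => hderiv t (interior_subset ht)) (fun t ht => hderiv₂ t (interior_subset ht))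
    fun t ht => hneg _ (hmem t (interior_subset ht)) (y - x) (sub_ne_zero.2 hxy.symm)

end SecondDerivativeTest

section Lobachevsky

theorem intervalIntegrable_log_abs_const_mul_sin (c a b : ℝ) :
    IntervalIntegrable (fun u => log |c * sin u|) MeasureTheory.volume a b := by
  have hmer : MeromorphicOn (fun u => c * sin u) (uIcc a b) := fun u _ =>
    AnalyticAt.meromorphicAt (by fun_prop)
  exact hmer.intervalIntegrable_log_norm

/-- As `Real.log x = log |x|`, the derivative is `-log |2 sin θ|` also where `sin θ < 0`. -/
theorem hasDerivAt_lobachevsky {θ : ℝ} (hθ : sin θ ≠ 0) :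
    HasDerivAt lobachevsky (-log (2 * sin θ)) θ := by
  have hmeas : Measurable fun u => log |2 * sin u| := by fun_prop
  have hcont : ContinuousAt (fun u => log |2 * sin u|) θ :=
    ContinuousAt.log (by fun_prop) (by positivity)
  rw [← log_abs]
  exact (intervalIntegral.integral_hasDerivAt_right
    (intervalIntegrable_log_abs_const_mul_sin 2 0 θ)
    hmeas.stronglyMeasurable.stronglyMeasurableAtFilter hcont).neg

theorem hasDerivAt_log_const_mul_sin {c θ : ℝ} (hc : c ≠ 0) (hθ : sin θ ≠ 0) :
    HasDerivAt (fun θ => log (c * sin θ)) (cot θ) θ := by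
  refine (((hasDerivAt_sin θ).const_mul c).log (mul_ne_zero hc hθ)).congr_deriv ?_
  rw [cot_eq_cos_div_sin, mul_div_mul_left _ _ hc]

end Lobachevsky

section CotangentForm

theorem sq_mul_add_sq_mul_add_sq_mul_pos {R : Type*} [CommRing R] [LinearOrder R]
    [IsStrictOrderedRing R] {a b c x y z : R} (habc : a + b + c = 0) (hab : a ≠ 0 ∨ b ≠ 0)
    (hxz : 0 < x + z) (hdet : 0 < x * y + y * z + z * x) :
    0 < a ^ 2 * x + b ^ 2 * y + c ^ 2 * z := by
  have complete_square : (x + z) * (a ^ 2 * x + b ^ 2 * y + c ^ 2 * z) =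
      ((x + z) * a + z * b) ^ 2 + (x * y + y * z + z * x) * b ^ 2 := by
    obtain rfl : c = -a - b := by linear_combination habc
    ring
  rw [← mul_pos_iff_of_pos_left hxz, complete_square]
  rcases eq_or_ne b 0 with rfl | hb
  · have ha : a ≠ 0 := by simpa using hab
    simp only [mul_zero, add_zero, zero_pow two_ne_zero]
    positivity
  · positivity

theorem cot_add_cot {α β : ℝ} (hα : sin α ≠ 0) (hβ : sin β ≠ 0) :
    cot α + cot β = sin (α + β) / (sin α * sin β) := by
  rw [cot_eq_cos_div_sin, cot_eq_cos_div_sin, sin_add]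
  field_simp
  ring

theorem cot_mul_cot_add_cot_mul_cot_add_cot_mul_cot {α β γ : ℝ} (hα : sin α ≠ 0)
    (hβ : sin β ≠ 0) (hγ : sin γ ≠ 0) (h : α + β + γ = π) :
    cot α * cot β + cot β * cot γ + cot γ * cot α = 1 := by
  obtain rfl : γ = π - (α + β) := by linarith
  rw [sin_pi_sub] at hγ
  have hcot : cot (π - (α + β)) = -(cos (α + β) / sin (α + β)) := by
    rw [cot_eq_cos_div_sin, cos_pi_sub, sin_pi_sub, neg_div]
  have hsum : (cot α + cot β) * cot (π - (α + β)) = 1 - cot α * cot β := by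
    rw [hcot, cot_add_cot hα hβ, cot_eq_cos_div_sin, cot_eq_cos_div_sin]
    field_simp
    rw [cos_add]
    ring
  linear_combination hsum

theorem sq_mul_cot_add_sq_mul_cot_add_sq_mul_cot_pos {α β γ a b c : ℝ} (hα : 0 < α) (hβ : 0 < β)
    (hγ : 0 < γ) (h : α + β + γ = π) (habc : a + b + c = 0) (hab : a ≠ 0 ∨ b ≠ 0) :
    0 < a ^ 2 * cot α + b ^ 2 * cot β + c ^ 2 * cot γ := by
  have hsα : 0 < sin α := sin_pos_of_pos_of_lt_pi hα (by linarith)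
  have hsβ : 0 < sin β := sin_pos_of_pos_of_lt_pi hβ (by linarith)
  have hsγ : 0 < sin γ := sin_pos_of_pos_of_lt_pi hγ (by linarith)
  have hlead : 0 < cot α + cot γ := by
    have hsin : sin (α + γ) = sin β := by rw [← sin_pi_sub]; congr 1; linarith
    rw [cot_add_cot hsα.ne' hsγ.ne', hsin]
    positivity
  refine sq_mul_add_sq_mul_add_sq_mul_pos habc hab hlead ?_
  rw [cot_mul_cot_add_cot_mul_cot_add_cot_mul_cot hsα.ne' hsβ.ne' hsγ.ne' h]
  exact one_pos

end CotangentForm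

section Volume

theorem convex_setOf_pos_pos_add_lt (c : ℝ) :
    Convex ℝ {p : ℝ × ℝ | 0 < p.1 ∧ 0 < p.2 ∧ p.1 + p.2 < c} :=
  (convex_halfSpace_gt (LinearMap.fst ℝ ℝ ℝ).isLinear 0).inter <|
    (convex_halfSpace_gt (LinearMap.snd ℝ ℝ ℝ).isLinear 0).inter <|
      convex_halfSpace_lt (LinearMap.fst ℝ ℝ ℝ + LinearMap.snd ℝ ℝ ℝ).isLinear c

theorem sin_ne_zero_of_mem_triangle {p : ℝ × ℝ} (hp : 0 < p.1 ∧ 0 < p.2 ∧ p.1 + p.2 < π) :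
    sin p.1 ≠ 0 ∧ sin p.2 ≠ 0 ∧ sin (π - p.1 - p.2) ≠ 0 := by
  obtain ⟨hα, hβ, hαβ⟩ := hp
  exact ⟨(sin_pos_of_pos_of_lt_pi hα (by linarith)).ne',
    (sin_pos_of_pos_of_lt_pi hβ (by linarith)).ne',
    (sin_pos_of_pos_of_lt_pi (by linarith) (by linarith)).ne'⟩

theorem hasLineDerivAt_add_add_sub_sub {f g h : ℝ → ℝ} {f' g' h' c : ℝ} {p : ℝ × ℝ}
    (hf : HasDerivAt f f' p.1) (hg : HasDerivAt g g' p.2) (hh : HasDerivAt h h' (c - p.1 - p.2))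
    (v : ℝ × ℝ) :
    HasLineDerivAt ℝ (fun q : ℝ × ℝ => f q.1 + g q.2 + h (c - q.1 - q.2))
      (v.1 * f' + v.2 * g' + (-v.1 - v.2) * h') p v := by
  have hγ := (hasFDerivAt_fst (𝕜 := ℝ) (p := p)).const_sub c |>.sub hasFDerivAt_snd
  have hsum := ((hf.comp_hasFDerivAt p hasFDerivAt_fst).add
    (hg.comp_hasFDerivAt p hasFDerivAt_snd)).add (hh.comp_hasFDerivAt p hγ)
  refine (hsum.hasLineDerivAt v).congr_deriv ?_
  simp [mul_comm]

/-- The derivative of the volume `V` at the point `p = (α, β)` in the direction `v`, written with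
the dependent angle `γ = π - α - β`, which varies at rate `-v.1 - v.2`. -/
noncomputable def volumeLineDeriv (v p : ℝ × ℝ) : ℝ :=
  v.1 * -log (2 * sin p.1) + v.2 * -log (2 * sin p.2) +
    (-v.1 - v.2) * -log (2 * sin (π - p.1 - p.2))

/-- The Hessian quadratic form of the volume `V` at the point `p = (α, β)`, evaluated at `v`. -/
noncomputable def volumeHessian (v p : ℝ × ℝ) : ℝ :=
  -(v.1 ^ 2 * cot p.1 + v.2 ^ 2 * cot p.2 + (-v.1 - v.2) ^ 2 * cot (π - p.1 - p.2))

theorem hasLineDerivAt_volume {p : ℝ × ℝ} (hα : sin p.1 ≠ 0) (hβ : sin p.2 ≠ 0)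
    (hγ : sin (π - p.1 - p.2) ≠ 0) (v : ℝ × ℝ) :
    HasLineDerivAt ℝ
      (fun p : ℝ × ℝ => lobachevsky p.1 + lobachevsky p.2 + lobachevsky (π - p.1 - p.2))
      (volumeLineDeriv v p) p v :=
  hasLineDerivAt_add_add_sub_sub (hasDerivAt_lobachevsky hα) (hasDerivAt_lobachevsky hβ)
    (hasDerivAt_lobachevsky hγ) v

theorem hasLineDerivAt_volumeLineDeriv {p : ℝ × ℝ} (hα : sin p.1 ≠ 0) (hβ : sin p.2 ≠ 0)
    (hγ : sin (π - p.1 - p.2) ≠ 0) (v : ℝ × ℝ) :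
    HasLineDerivAt ℝ (volumeLineDeriv v) (volumeHessian v p) p v := by
  have hlog {θ : ℝ} (hθ : sin θ ≠ 0) (a : ℝ) :
      HasDerivAt (fun θ => a * -log (2 * sin θ)) (a * -cot θ) θ :=
    (hasDerivAt_log_const_mul_sin two_ne_zero hθ).neg.const_mul a
  refine (hasLineDerivAt_add_add_sub_sub (hlog hα v.1) (hlog hβ v.2)
    (hlog hγ (-v.1 - v.2)) v).congr_deriv ?_
  rw [volumeHessian]
  ring

theorem volumeHessian_neg {p v : ℝ × ℝ} (hp : 0 < p.1 ∧ 0 < p.2 ∧ p.1 + p.2 < π) (hv : v ≠ 0) :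
    volumeHessian v p < 0 := by
  obtain ⟨hα, hβ, hαβ⟩ := hp
  have hv' : v.1 ≠ 0 ∨ v.2 ≠ 0 := by
    contrapose! hv
    exact Prod.ext hv.1 hv.2
  exact neg_neg_of_pos <| sq_mul_cot_add_sq_mul_cot_add_sq_mul_cot_pos hα hβ (by linarith)
    (by ring) (by ring) hv'

end Volume

/-- The volume `V(α,β) = Λ(α) + Λ(β) + Λ(π - α - β)` of the ideal hyperbolic simplex
is strictly concave on the open triangle `{α > 0, β > 0, α + β < π}`. -/
theorem volume_strictConcaveOn :
    StrictConcaveOn ℝ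
      {p : ℝ × ℝ | 0 < p.1 ∧ 0 < p.2 ∧ p.1 + p.2 < Real.pi}
      (fun p : ℝ × ℝ =>
        lobachevsky p.1 + lobachevsky p.2 + lobachevsky (Real.pi - p.1 - p.2)) := by
  refine strictConcaveOn_of_hasLineDerivAt2_neg (f' := volumeLineDeriv)
    (convex_setOf_pos_pos_add_lt π) (fun p hp v => ?_) (fun p hp v => ?_)
    fun _ hp _ hv => volumeHessian_neg hp hv
  all_goals obtain ⟨hα, hβ, hγ⟩ := sin_ne_zero_of_mem_triangle hp
  · exact hasLineDerivAt_volume hα hβ hγ v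
  · exact hasLineDerivAt_volumeLineDeriv hα hβ hγ v
end

section
/- For every β ∈ (0, π), the function α ↦ Λ(α) + Λ(β) + Λ(π − α − β) tends to 0 as α tends to 0 from the right. (This is the vanishing part of Corollary 2.9: the volume of the ideal hyperbolic simplex vanishes when one of its dihedral angles goes to 0.) -/
/-!
The function `Λ` is continuous, because `log |2 sin u|` is locally integrable, and it vanishes at
`0`. The classical value `∫₀^π log (sin u) du = -π log 2` says that `Λ(π) = 0`; with the symmetry of
`sin` about `π / 2` this gives `Λ(π - β) = -Λ(β)`. So the volume is continuous in `α`, and at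
`α = 0` it equals `Λ(0) + Λ(β) + Λ(π - β) = 0`.
-/

open Filter Real Topology intervalIntegral
open MeasureTheory (volume)

theorem intervalIntegrable_log_abs_mul_sin (c a b : ℝ) :
    IntervalIntegrable (fun u ↦ log |c * sin u|) volume a b := by
  have h_mero : MeromorphicOn (fun u : ℝ ↦ c * sin u) (Set.uIcc a b) :=
    fun _ _ ↦ AnalyticAt.meromorphicAt (by fun_prop)
  exact h_mero.intervalIntegrable_log_norm

theorem integral_log_abs_mul_sin_zero_pi {c : ℝ} (hc : c ≠ 0) :
    ∫ u in 0..π, log |c * sin u| = π * log (|c| / 2) := by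
  have h_split : ∀ u ∈ Set.Ioo 0 π, log |c * sin u| = log |c| + log (sin u) := fun u hu ↦ by
    rw [log_abs, log_mul hc (sin_pos_of_mem_Ioo hu).ne', log_abs]
  calc ∫ u in 0..π, log |c * sin u|
    _ = ∫ u in 0..π, (log |c| + log (sin u)) :=
        integral_congr_Ioo_of_le pi_pos.le h_split
    _ = π * log |c| - log 2 * π := by
        have h_log_sin : IntervalIntegrable (fun u ↦ log (sin u)) volume 0 π :=
          intervalIntegrable_log_sin
        rw [integral_add intervalIntegrable_const h_log_sin, integral_const,
          integral_log_sin_zero_pi, sub_zero, smul_eq_mul]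
        ring
    _ = π * log (|c| / 2) := by
        rw [log_div (abs_ne_zero.mpr hc) two_ne_zero]
        ring

theorem continuous_lobachevsky : Continuous lobachevsky :=
  (continuous_primitive (intervalIntegrable_log_abs_mul_sin 2) 0).neg

theorem lobachevsky_zero : lobachevsky 0 = 0 := by
  simp [lobachevsky]

theorem lobachevsky_pi : lobachevsky π = 0 := by
  rw [lobachevsky, integral_log_abs_mul_sin_zero_pi two_ne_zero, abs_two, div_self two_ne_zero,
    log_one, mul_zero, neg_zero]

theorem lobachevsky_sub_lobachevsky (a b : ℝ) :
    lobachevsky a - lobachevsky b = ∫ u in a..b, log |2 * sin u| := by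
  have h_int := intervalIntegrable_log_abs_mul_sin 2
  rw [lobachevsky, lobachevsky, neg_sub_neg, integral_interval_sub_left (h_int 0 b) (h_int 0 a)]

theorem lobachevsky_pi_sub (θ : ℝ) : lobachevsky (π - θ) = -lobachevsky θ := by
  have h_symm : ∫ u in 0..π - θ, log |2 * sin u| = ∫ u in θ..π, log |2 * sin u| := by
    simpa only [sin_pi_sub, sub_self] using
      (integral_comp_sub_left (a := θ) (b := π) (fun u ↦ log |2 * sin u|) π).symm
  rw [lobachevsky, h_symm, ← lobachevsky_sub_lobachevsky, lobachevsky_pi, sub_zero]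

theorem volume_tendsto_zero_general (β : ℝ) :
    Tendsto (fun α ↦ lobachevsky α + lobachevsky β + lobachevsky (π - α - β)) (𝓝 0) (𝓝 0) := by
  have h_cont : Continuous fun α ↦ lobachevsky α + lobachevsky β + lobachevsky (π - α - β) := by
    have := continuous_lobachevsky
    fun_prop
  refine h_cont.tendsto' 0 0 ?_
  rw [lobachevsky_zero, sub_zero, lobachevsky_pi_sub, zero_add, add_neg_cancel]

/-- For every `β ∈ (0, π)`, the volume `Λ(α) + Λ(β) + Λ(π - α - β)` of the ideal
hyperbolic simplex tends to `0` as `α → 0⁺`. -/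
theorem volume_tendsto_zero (β : ℝ) (hβ : β ∈ Set.Ioo 0 Real.pi) :
    Filter.Tendsto
      (fun α : ℝ => lobachevsky α + lobachevsky β + lobachevsky (Real.pi - α - β))
      (nhdsWithin 0 (Set.Ioi 0)) (nhds 0) :=
  (volume_tendsto_zero_general β).mono_left nhdsWithin_le_nhds
end

section
/- For any L > 0 and u₀ > 0, there exists c > 0 (depending only on L and u₀) with the following property. Let N ∈ ℕ, let x₁ < x₂ < ⋯ < x_N be points of (0, L), and let u : [0, L] → ℝ be a continuous function such that: (i) u(s) ≥ u₀ for all s ∈ [0, L]; (ii) u is twice continuously differentiable on [0, L] ∖ {x₁, …, x_N} and satisfies u''(s) = −u(s) there; (iii) at each x_i the one-sided limits u'(x_i⁻) and u'(x_i⁺) of the derivative exist and satisfy u'(x_i⁺) > u'(x_i⁻) (a positive jump in the derivative). Then ∫₀^L √( 1/u(s)² + u'(s)²/(u(s)²·(1 + u(s)²)) ) ds ≤ c. (Proposition 4.12 of the paper.) -/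
open Set Filter

/-!
Off the singular points the phase `θ = arctan (u' / u)` satisfies
`θ' + 1 = u (u'' + u) / (u² + u'²)`, and

  `(- sin θ / u)' = √(1 + (u' / u)²) / u - (θ' + 1) cos θ / u`.

The integrand is at most `√(1 + (u' / u)²) / u`, so it is dominated by the derivative of
`Φ = (θ + s) / u₀ - sin θ / u`: the remaining term `(θ' + 1) (1 / u₀ - cos θ / u)` is nonnegative.
An upward jump of `u'` raises `θ`, and raises `Φ` because the derivative `1 / u₀ - cos θ / u` of
`Φ` in `θ` is nonnegative. Hence the integral is at most the total increase of `Φ`, which is bounded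
in terms of `u₀` and the length of the interval alone, however many jumps there are.
-/

section

open MeasureTheory
open scoped Topology Real

/-- A point where both one-sided limits of `f` exist and the left one is at most the right one.
The value of `f` at the point plays no role, and equality of the two limits is allowed. -/
def HasNonnegJumpAt {α β : Type*} [TopologicalSpace α] [Preorder α] [TopologicalSpace β]
    [Preorder β] (f : α → β) (q : α) : Prop :=
  ∃ l r, Tendsto f (𝓝[<] q) (𝓝 l) ∧ Tendsto f (𝓝[>] q) (𝓝 r) ∧ l ≤ r

theorem HasNonnegJumpAt.le_of_eventually_le {α β : Type*} [TopologicalSpace α] [Preorder α]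
    [TopologicalSpace β] [Preorder β] [OrderClosedTopology β] {f : α → β} {q : α} {c d : β}
    [(𝓝[<] q).NeBot] [(𝓝[>] q).NeBot] (hf : HasNonnegJumpAt f q)
    (hc : ∀ᶠ z in 𝓝[<] q, c ≤ f z) (hd : ∀ᶠ z in 𝓝[>] q, f z ≤ d) : c ≤ d := by
  obtain ⟨l, r, hl, hr, hlr⟩ := hf
  exact (ge_of_tendsto hl hc).trans (hlr.trans (le_of_tendsto hr hd))

theorem monotoneOn_sdiff_of_hasNonnegJumpAt {α β : Type*} [LinearOrder α] [TopologicalSpace α]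
    [OrderTopology α] [DenselyOrdered α] [Preorder β] [TopologicalSpace β] [OrderClosedTopology β]
    {f : α → β} {I S : Set α} [I.OrdConnected] (hS : S.Finite)
    (hmono : ∀ x ∈ I, ∀ y ∈ I, x ≤ y → Disjoint S (Icc x y) → f x ≤ f y)
    (hjump : ∀ q ∈ S, HasNonnegJumpAt f q) : MonotoneOn f (I \ S) := by
  suffices key : ∀ x ∈ I \ S, ∀ y ∈ I \ S, x ≤ y → S ∩ Ioo x y ⊆ S → f x ≤ f y from
    fun x hx y hy hxy => key x hx y hy hxy inter_subset_left
  refine hS.induction_on_subset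
    (motive := fun T _ => ∀ x ∈ I \ S, ∀ y ∈ I \ S, x ≤ y → S ∩ Ioo x y ⊆ T → f x ≤ f y) _ ?_ ?_
  · intro x hx y hy hxy hempty
    refine hmono x hx.1 y hy.1 hxy (Set.disjoint_left.2 fun q hqS hq => ?_)
    exact hempty ⟨hqS, lt_of_le_of_ne hq.1 fun h => hx.2 (h ▸ hqS),
      lt_of_le_of_ne hq.2 fun h => hy.2 (h ▸ hqS)⟩
  · intro q T hqS _ _ ih x hx y hy hxy hsub
    by_cases hq : q ∈ Ioo x y
    · have : (𝓝[<] q).NeBot := nhdsLT_neBot_of_exists_lt ⟨x, hq.1⟩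
      have : (𝓝[>] q).NeBot := nhdsGT_neBot_of_exists_gt ⟨y, hq.2⟩
      have hI : Icc x y ⊆ I := Set.OrdConnected.out ‹_› hx.1 hy.1
      have hnotMem : ∀ᶠ z in 𝓝[≠] q, z ∉ S := nhdsNE_le_cofinite q hS.compl_mem_cofinite
      refine (hjump q hqS).le_of_eventually_le ?_ ?_
      · filter_upwards [Ioo_mem_nhdsLT hq.1, hnotMem.filter_mono (nhdsLT_le_nhdsNE q)]
          with z hz hzS
        have hzy : z < y := hz.2.trans hq.2
        refine ih x hx z ⟨hI ⟨hz.1.le, hzy.le⟩, hzS⟩ hz.1.le fun s ⟨hs, hxs, hsz⟩ => ?_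
        exact (hsub ⟨hs, hxs, hsz.trans hzy⟩).resolve_left (hsz.trans hz.2).ne
      · filter_upwards [Ioo_mem_nhdsGT hq.2, hnotMem.filter_mono (nhdsGT_le_nhdsNE q)]
          with z hz hzS
        have hxz : x < z := hq.1.trans hz.1
        refine ih z ⟨hI ⟨hxz.le, hz.2.le⟩, hzS⟩ y hy hz.2.le fun s ⟨hs, hzs, hsy⟩ => ?_
        exact (hsub ⟨hs, hxz.trans hzs, hsy⟩).resolve_left (hz.1.trans hzs).ne'
    · refine ih x hx y hy hxy fun s hs => (hsub hs).resolve_left ?_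
      rintro rfl
      exact hq hs.2

theorem monotoneOn_sdiff_of_hasDerivWithinAt_nonneg {f f' : ℝ → ℝ} {I S : Set ℝ}
    [I.OrdConnected] (hS : S.Finite) (hf : ∀ s ∈ I \ S, HasDerivWithinAt f (f' s) I s)
    (hf' : ∀ s ∈ I \ S, 0 ≤ f' s) (hjump : ∀ q ∈ S, HasNonnegJumpAt f q) :
    MonotoneOn f (I \ S) := by
  refine monotoneOn_sdiff_of_hasNonnegJumpAt hS (fun x hx y hy hxy hdisj => ?_) hjump
  have hIcc : Icc x y ⊆ I := Set.OrdConnected.out ‹_› hx hy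
  have hmem : ∀ s ∈ Icc x y, s ∈ I \ S := fun s hs => ⟨hIcc hs, Set.disjoint_right.1 hdisj hs⟩
  refine monotoneOn_of_hasDerivWithinAt_nonneg (convex_Icc x y)
    (fun s hs => (hf s (hmem s hs)).continuousWithinAt.mono hIcc)
    (fun s hs => (hf s (hmem s (interior_subset hs))).mono (interior_subset.trans hIcc))
    (fun s hs => hf' s (hmem s (interior_subset hs)))
    (left_mem_Icc.2 hxy) (right_mem_Icc.2 hxy) hxy

theorem intervalIntegral_le_sub_of_monotoneOn_sdiff {f f' g : ℝ → ℝ} {a b : ℝ} {S : Set ℝ}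
    (hab : a ≤ b) (hS : S.Finite) (ha : a ∉ S) (hb : b ∉ S)
    (hmono : MonotoneOn f (Icc a b \ S)) (hf : ∀ s ∈ Ioo a b \ S, HasDerivAt f (f' s) s)
    (hg : ∀ s, 0 ≤ g s) (hgf : ∀ s ∈ Ioo a b \ S, g s ≤ f' s) :
    ∫ s in a..b, g s ≤ f b - f a := by
  have haI : a ∈ Icc a b \ S := ⟨left_mem_Icc.2 hab, ha⟩
  have hbI : b ∈ Icc a b \ S := ⟨right_mem_Icc.2 hab, hb⟩
  -- The values of `f` on `S` are irrelevant; replace them by monotone ones.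
  obtain ⟨F, hF, hfF⟩ := hmono.exists_monotone_extension
    ⟨f a, forall_mem_image.2 fun s hs => hmono haI hs hs.1.1⟩
    ⟨f b, forall_mem_image.2 fun s hs => hmono hs hbI hs.1.2⟩
  have hderiv : ∀ s ∈ Ioo a b \ S, deriv F s = f' s := fun s hs => by
    have hnhds : Ioo a b \ S ∈ 𝓝 s := (isOpen_Ioo.sdiff hS.isClosed).mem_nhds hs
    refine ((hf s hs).congr_of_eventuallyEq ?_).deriv
    filter_upwards [hnhds] with t ht
    exact (hfF ⟨Ioo_subset_Icc_self ht.1, ht.2⟩).symm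
  have hFmono : MonotoneOn F (uIcc a b) := hF.monotoneOn _
  have hint : IntegrableOn (deriv F) (Ioo a b) :=
    (intervalIntegrable_iff_integrableOn_Ioo_of_le hab).1 hFmono.intervalIntegrable_deriv
  calc ∫ s in a..b, g s
      ≤ ∫ s in a..b, deriv F s := by
        simp only [intervalIntegral.integral_of_le hab, integral_Ioc_eq_integral_Ioo]
        refine integral_mono_of_nonneg (ae_of_all _ hg) hint ?_
        filter_upwards [hS.countable.ae_notMem _, ae_restrict_mem measurableSet_Ioo] with s hsS hs
        exact (hgf s ⟨hs, hsS⟩).trans_eq (hderiv s ⟨hs, hsS⟩).symm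
    _ ≤ F b - F a := by
        have := hFmono.intervalIntegral_deriv_mem_uIcc
        rw [uIcc_of_le (sub_nonneg.2 (hF hab))] at this
        exact this.2
    _ = f b - f a := by rw [hfF haI, hfF hbI]

/-- The Prüfer-type potential `Φ = (θ + s) / u₀ - sin θ / v` with phase `θ = arctan (p / v)`, where
`v` and `p` stand for the values of `u` and `u'` at `s`. -/
noncomputable def phasePotential (u₀ v p s : ℝ) : ℝ :=
  (Real.arctan (p / v) + s) / u₀ - Real.sin (Real.arctan (p / v)) / v

theorem monotone_div_sub_sin_div {u₀ v : ℝ} (hu₀ : 0 < u₀) (hv : u₀ ≤ v) :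
    Monotone fun θ : ℝ => θ / u₀ - Real.sin θ / v := by
  refine monotone_of_hasDerivAt_nonneg
    (fun θ => ((hasDerivAt_id θ).div_const u₀).sub ((Real.hasDerivAt_sin θ).div_const v))
    fun θ => sub_nonneg.2 ?_
  gcongr
  exact Real.cos_le_one θ

theorem monotone_phasePotential_slope {u₀ v : ℝ} (hu₀ : 0 < u₀) (hv : u₀ ≤ v) (s : ℝ) :
    Monotone fun p => phasePotential u₀ v p s := by
  intro p q hpq
  have hv₀ : 0 < v := hu₀.trans_le hv
  have hθ : Real.arctan (p / v) ≤ Real.arctan (q / v) := Real.arctan_mono (by gcongr)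
  have := monotone_div_sub_sin_div hu₀ hv hθ
  simp only [phasePotential, add_div] at this ⊢
  linarith

theorem phasePotential_sub_le {u₀ v w p q s t : ℝ} (hu₀ : 0 < u₀) (hv : u₀ ≤ v) (hw : u₀ ≤ w) :
    phasePotential u₀ w q t - phasePotential u₀ v p s ≤ (t - s + π + 2) / u₀ := by
  have habs : ∀ {x θ : ℝ}, u₀ ≤ x → |Real.sin θ / x| ≤ 1 / u₀ := fun {x θ} hx => by
    rw [abs_div, abs_of_pos (hu₀.trans_le hx)]
    gcongr
    exact Real.abs_sin_le_one θ
  have hsin_v := (abs_le.1 (habs (θ := Real.arctan (p / v)) hv)).2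
  have hsin_w := (abs_le.1 (habs (θ := Real.arctan (q / w)) hw)).1
  have hphase : (Real.arctan (q / w) - Real.arctan (p / v)) / u₀ ≤ π / u₀ := by
    gcongr
    linarith [Real.arctan_lt_pi_div_two (q / w), Real.neg_pi_div_two_lt_arctan (p / v)]
  simp only [phasePotential, add_div, sub_div] at hphase ⊢
  linarith [add_div 1 1 u₀, one_add_one_eq_two (R := ℝ)]

theorem tendsto_phasePotential {u₀ v p s : ℝ} {u u' : ℝ → ℝ} {l : Filter ℝ} (hv : v ≠ 0)
    (hl : l ≤ 𝓝 s) (hu : Tendsto u l (𝓝 v)) (hu' : Tendsto u' l (𝓝 p)) :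
    Tendsto (fun t => phasePotential u₀ (u t) (u' t) t) l (𝓝 (phasePotential u₀ v p s)) := by
  have hphase := (Real.continuous_arctan.tendsto _).comp (hu'.div hu hv)
  exact ((hphase.add hl).div_const u₀).sub
    (((Real.continuous_sin.tendsto _).comp hphase).div hu hv)

theorem hasNonnegJumpAt_phasePotential {u₀ s : ℝ} {u u' : ℝ → ℝ} (hu₀ : 0 < u₀)
    (hu : ContinuousAt u s) (hlb : u₀ ≤ u s) (hjump : HasNonnegJumpAt u' s) :
    HasNonnegJumpAt (fun t => phasePotential u₀ (u t) (u' t) t) s := by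
  obtain ⟨l, r, hl, hr, hlr⟩ := hjump
  have hne : u s ≠ 0 := (hu₀.trans_le hlb).ne'
  exact ⟨_, _,
    tendsto_phasePotential hne nhdsWithin_le_nhds (hu.mono_left nhdsWithin_le_nhds) hl,
    tendsto_phasePotential hne nhdsWithin_le_nhds (hu.mono_left nhdsWithin_le_nhds) hr,
    monotone_phasePotential_slope hu₀ hlb s hlr⟩

theorem cos_arctan_add_sin_arctan_mul (w : ℝ) :
    Real.cos (Real.arctan w) + Real.sin (Real.arctan w) * w = √(1 + w ^ 2) := by
  rw [Real.cos_arctan, Real.sin_arctan, div_mul_eq_mul_div, ← add_div, ← sq, Real.div_sqrt]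

theorem hasDerivWithinAt_arctan_div {u u' : ℝ → ℝ} {u'' s : ℝ} {I : Set ℝ} (hne : u s ≠ 0)
    (hu : HasDerivWithinAt u (u' s) I s) (hu' : HasDerivWithinAt u' u'' I s) :
    HasDerivWithinAt (fun t => Real.arctan (u' t / u t))
      (u s * (u'' + u s) / (u s ^ 2 + u' s ^ 2) - 1) I s := by
  refine (hu'.fun_div hu hne).arctan.congr_deriv ?_
  field_simp
  ring

theorem hasDerivWithinAt_phasePotential {u₀ : ℝ} {u u' : ℝ → ℝ} {u'' s : ℝ} {I : Set ℝ}
    (hne : u s ≠ 0) (hu : HasDerivWithinAt u (u' s) I s) (hu' : HasDerivWithinAt u' u'' I s) :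
    HasDerivWithinAt (fun t => phasePotential u₀ (u t) (u' t) t)
      (u s * (u'' + u s) / (u s ^ 2 + u' s ^ 2) *
          (1 / u₀ - Real.cos (Real.arctan (u' s / u s)) / u s) +
        √(1 + (u' s / u s) ^ 2) / u s) I s := by
  have hphase := hasDerivWithinAt_arctan_div hne hu hu'
  refine (((hphase.fun_add (hasDerivWithinAt_id s I)).div_const u₀).fun_sub
    (hphase.sin.fun_div hu hne)).congr_deriv ?_
  rw [← cos_arctan_add_sin_arctan_mul]
  field_simp
  ring

theorem sqrt_integrand_le {v : ℝ} (hv : 0 < v) (p : ℝ) :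
    √(1 / v ^ 2 + p ^ 2 / (v ^ 2 * (1 + v ^ 2))) ≤ √(1 + (p / v) ^ 2) / v := by
  rw [Real.sqrt_le_left (by positivity), div_pow, Real.sq_sqrt (by positivity), add_div, div_pow,
    div_div, mul_comm (v ^ 2) (v ^ 2)]
  gcongr
  linarith

theorem sqrt_integrand_le_deriv_phasePotential {u₀ v p a : ℝ} (hu₀ : 0 < u₀) (hv : u₀ ≤ v)
    (ha : -v ≤ a) :
    √(1 / v ^ 2 + p ^ 2 / (v ^ 2 * (1 + v ^ 2))) ≤
      v * (a + v) / (v ^ 2 + p ^ 2) * (1 / u₀ - Real.cos (Real.arctan (p / v)) / v) +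
        √(1 + (p / v) ^ 2) / v := by
  have hv₀ : 0 < v := hu₀.trans_le hv
  have hphase : 0 ≤ v * (a + v) / (v ^ 2 + p ^ 2) := by
    have : 0 ≤ a + v := by linarith
    positivity
  have hcoeff : 0 ≤ 1 / u₀ - Real.cos (Real.arctan (p / v)) / v := by
    rw [sub_nonneg]
    gcongr
    exact Real.cos_le_one _
  linarith [sqrt_integrand_le hv₀ p, mul_nonneg hphase hcoeff]

theorem integral_bound_of_jump_ode_general {a b u₀ : ℝ} (hab : a ≤ b) (hu₀ : 0 < u₀)
    {S : Set ℝ} (hS : S.Finite) (hSI : S ⊆ Ioo a b) {u u' u'' : ℝ → ℝ}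
    (hcont : ContinuousOn u (Icc a b)) (hlb : ∀ s ∈ Icc a b, u₀ ≤ u s)
    (hu : ∀ s ∈ Icc a b \ S, HasDerivWithinAt u (u' s) (Icc a b) s)
    (hu' : ∀ s ∈ Icc a b \ S, HasDerivWithinAt u' (u'' s) (Icc a b) s)
    (hode : ∀ s ∈ Icc a b \ S, -u s ≤ u'' s) (hjump : ∀ q ∈ S, HasNonnegJumpAt u' q) :
    ∫ s in a..b, √(1 / u s ^ 2 + u' s ^ 2 / (u s ^ 2 * (1 + u s ^ 2))) ≤
      (b - a + π + 2) / u₀ := by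
  have hderiv := fun s (hs : s ∈ Icc a b \ S) =>
    hasDerivWithinAt_phasePotential (u₀ := u₀) (hu₀.trans_le (hlb s hs.1)).ne' (hu s hs) (hu' s hs)
  have hle := fun s (hs : s ∈ Icc a b \ S) =>
    sqrt_integrand_le_deriv_phasePotential (p := u' s) hu₀ (hlb s hs.1) (hode s hs)
  have hjumpΦ : ∀ q ∈ S, HasNonnegJumpAt (fun t => phasePotential u₀ (u t) (u' t) t) q :=
    fun q hq => hasNonnegJumpAt_phasePotential hu₀
      (hcont.continuousAt (Icc_mem_nhds (hSI hq).1 (hSI hq).2))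
      (hlb q (Ioo_subset_Icc_self (hSI hq))) (hjump q hq)
  have hIcc : ∀ {s}, s ∈ Ioo a b \ S → s ∈ Icc a b \ S :=
    fun hs => ⟨Ioo_subset_Icc_self hs.1, hs.2⟩
  have hmono := monotoneOn_sdiff_of_hasDerivWithinAt_nonneg hS hderiv
    (fun s hs => (Real.sqrt_nonneg _).trans (hle s hs)) hjumpΦ
  refine (intervalIntegral_le_sub_of_monotoneOn_sdiff hab hS (fun h => (hSI h).1.ne rfl)
    (fun h => (hSI h).2.ne rfl) hmono
    (fun s hs => (hderiv s (hIcc hs)).hasDerivAt (Icc_mem_nhds hs.1.1 hs.1.2))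
    (fun s => Real.sqrt_nonneg _) (fun s hs => hle s (hIcc hs))).trans ?_
  exact phasePotential_sub_le hu₀ (hlb a (left_mem_Icc.2 hab)) (hlb b (right_mem_Icc.2 hab))

end

/-- Proposition 4.12: for any `L > 0` and `u₀ > 0` there is a constant `c > 0` such that
for any continuous `u : [0, L] → ℝ` bounded below by `u₀`, twice continuously
differentiable away from finitely many points `x₁ < ⋯ < x_N` of `(0, L)` with
`u'' = -u` there, and whose derivative has a positive jump at each `xᵢ`, one has
`∫₀^L √(1/u² + u'²/(u²(1+u²))) ≤ c`. -/
theorem integral_bound_of_jump_ode (L u₀ : ℝ) (hL : 0 < L) (hu₀ : 0 < u₀) :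
    ∃ c > 0, ∀ (N : ℕ) (x : Fin N → ℝ), StrictMono x → (∀ i, x i ∈ Set.Ioo 0 L) →
      ∀ u u' : ℝ → ℝ,
        ContinuousOn u (Set.Icc 0 L) →
        (∀ s ∈ Set.Icc 0 L, u₀ ≤ u s) →
        (∀ s ∈ Set.Icc 0 L \ Set.range x,
          HasDerivWithinAt u (u' s) (Set.Icc 0 L) s) →
        ContinuousOn u' (Set.Icc 0 L \ Set.range x) →
        (∀ s ∈ Set.Icc 0 L \ Set.range x,
          HasDerivWithinAt u' (-(u s)) (Set.Icc 0 L) s) →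
        (∀ i : Fin N, ∃ a b : ℝ,
          Tendsto u' (nhdsWithin (x i) (Set.Iio (x i))) (nhds a) ∧
          Tendsto u' (nhdsWithin (x i) (Set.Ioi (x i))) (nhds b) ∧
          a < b) →
        (∫ s in (0:ℝ)..L,
            Real.sqrt (1 / (u s) ^ 2 + (u' s) ^ 2 / ((u s) ^ 2 * (1 + (u s) ^ 2)))) ≤ c := by
  refine ⟨(L - 0 + Real.pi + 2) / u₀, by rw [sub_zero]; positivity, ?_⟩
  intro N x _ hx u u' hcont hlb hu _ hu' hjump
  exact integral_bound_of_jump_ode_general hL.le hu₀ (finite_range x) (range_subset_iff.2 hx)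
    hcont hlb hu hu' (fun s _ => le_rfl) (forall_mem_range.2 fun i =>
      let ⟨l, r, hl, hr, hlr⟩ := hjump i; ⟨l, r, hl, hr, hlr.le⟩)
end
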